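/- arXiv:1411.2286 — 2 statements merged into one kernel-verified Lean document; each statement's English description precedes it below -/
import Mathlib

section
/- Let d ≥ 1 and for j = 1, …, m let φ_j : ℝ^d → ℝ^{d_j} be the orthogonal projection onto a subset of d_j of the coordinates, i.e. φ_j(x_1, …, x_d) = (y_1, …, y_{d_j}) with {y_1, …, y_{d_j}} ⊆ {x_1, …, x_d}. For each i ∈ {1, …, d} and j ∈ {1, …, m}, let δ_{i,j} = dim(φ_j(⟨e_i⟩)), where ⟨e_i⟩ is the line spanned by the i-th standard basis vector e_i (so δ_{i,j} = 1 if φ_j retains coordinate x_i and δ_{i,j} = 0 otherwise). Let (s_1, …, s_m) ∈ [0,1]^m. Then the following are equivalent: (i) for every linear subspace H of ℝ^d, dim(H) ≤ Σ_{j=1}^m s_j · dim(φ_j(H)); (ii) for every i ∈ {1, …, d}, 1 ≤ Σ_{j=1}^m s_j · δ_{i,j}. -/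
/-- The orthogonal projection of `ℝ^d` onto the coordinates in `K`, as a linear map. -/
def coordProj (d : ℕ) (K : Finset (Fin d)) : (Fin d → ℝ) →ₗ[ℝ] ({ i // i ∈ K } → ℝ) :=
  LinearMap.funLeft ℝ ℝ (fun i => (i : Fin d))

theorem delta_le_aux (d : ℕ) (K : Finset (Fin d)) (i : Fin d) :
    (Module.finrank ℝ ((Submodule.span ℝ {(Pi.single i (1 : ℝ) : Fin d → ℝ)}).map
      (coordProj d K)) : ℝ) ≤ if i ∈ K then 1 else 0 := by
  rw [Submodule.map_span, Set.image_singleton]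
  split_ifs with h
  · exact_mod_cast (finrank_span_le_card (R := ℝ) _).trans (by simp)
  · have h0 : coordProj d K (Pi.single i (1 : ℝ)) = 0 := by
      ext k
      have hk : (k : Fin d) ≠ i := fun hk => h (hk ▸ k.2)
      simp [coordProj, LinearMap.funLeft_apply, hk]
    rw [h0]
    simp

theorem exists_coords_aux (d : ℕ) (H : Submodule ℝ (Fin d → ℝ)) :
    ∃ I : Finset (Fin d), Module.finrank ℝ H ≤ I.card ∧
      ∀ K : Finset (Fin d), (I ∩ K).card ≤ Module.finrank ℝ (H.map (coordProj d K)) := by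
  classical
  let f : Fin d → Module.Dual ℝ H := fun i => (LinearMap.proj i).comp H.subtype
  obtain ⟨κ, a, ha, hspan, hli⟩ := exists_linearIndependent' ℝ f
  have : Finite κ := Finite.of_injective a ha
  have : Fintype κ := Fintype.ofFinite κ
  have hliI : ∀ i : {i // i ∈ Finset.univ.image a}, ∃ k, a k = i := by
    rintro ⟨i, hi⟩
    simpa using hi
  choose b hb using hliI
  have hbinj : Function.Injective b := by
    intro x y h
    apply Subtype.ext
    rw [← hb x, ← hb y, h]
  refine ⟨Finset.univ.image a, ?_, ?_⟩
  · rw [Finset.card_image_of_injective _ ha, Finset.card_univ]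
    let g : H →ₗ[ℝ] (κ → ℝ) := LinearMap.pi (fun k => f (a k))
    have hg : Function.Injective g := by
      rw [injective_iff_map_eq_zero]
      intro x hx
      have hle : Submodule.span ℝ (Set.range f) ≤
          LinearMap.ker (Module.Dual.eval ℝ H x) := by
        rw [← hspan, Submodule.span_le]
        rintro _ ⟨k, rfl⟩
        exact congrFun hx k
      ext i
      exact hle (Submodule.subset_span ⟨i, rfl⟩)
    simpa using LinearMap.finrank_le_finrank_of_injective hg
  · intro K
    let p : H →ₗ[ℝ] H.map (coordProj d K) :=
      (coordProj d K).restrict (fun x hx => Submodule.mem_map_of_mem hx)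
    let g : {i // i ∈ Finset.univ.image a ∩ K} → Module.Dual ℝ (H.map (coordProj d K)) :=
      fun i => (LinearMap.proj (⟨i.1, (Finset.mem_inter.1 i.2).2⟩ : {i // i ∈ K})).comp
        (H.map (coordProj d K)).subtype
    have hgli : LinearIndependent ℝ g := by
      apply LinearIndependent.of_comp (p.dualMap)
      let c : {i // i ∈ Finset.univ.image a ∩ K} → κ :=
        fun i => b ⟨i.1, (Finset.mem_inter.1 i.2).1⟩
      have hc : Function.Injective c := by
        intro x y h
        have := hbinj h
        exact Subtype.ext (congrArg (fun z => z.1) this)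
      have h2 := hli.comp c hc
      have he : (f ∘ a) ∘ c = p.dualMap ∘ g := by
        funext i
        have : a (c i) = i.1 := hb _
        simp only [Function.comp_apply, this]
        rfl
      rw [he] at h2
      exact h2
    have := hgli.fintype_card_le_finrank
    rwa [Subspace.dual_finrank_eq, Fintype.card_coe] at this

/-- For orthogonal coordinate projections `φ_j` (projecting onto the
coordinates in `K j`) and exponents `s_j ∈ [0,1]`, the condition
`dim H ≤ Σ_j s_j · dim (φ_j H)` for all linear subspaces `H ≤ ℝ^d` is equivalent to
the finitely many conditions `1 ≤ Σ_j s_j · δ_{i,j}` for `i = 1, …, d`, where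
`δ_{i,j} = dim (φ_j ⟨e_i⟩)` and `e_i` is the `i`-th standard basis vector. -/
theorem stmt11 (d : ℕ) (hd : 1 ≤ d) (m : ℕ) (K : Fin m → Finset (Fin d))
    (s : Fin m → ℝ) (hs : ∀ j, s j ∈ Set.Icc (0 : ℝ) 1) :
    (∀ H : Submodule ℝ (Fin d → ℝ),
        (Module.finrank ℝ H : ℝ) ≤
          ∑ j, s j * (Module.finrank ℝ (H.map (coordProj d (K j))) : ℝ))
    ↔ (∀ i : Fin d, (1 : ℝ) ≤ ∑ j, s j *
        (Module.finrank ℝ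
          ((Submodule.span ℝ {Pi.single i (1 : ℝ)}).map (coordProj d (K j))) : ℝ)) := by
  classical
  constructor
  · intro h i
    have := h (Submodule.span ℝ {Pi.single i (1 : ℝ)})
    rwa [finrank_span_singleton (by simp), Nat.cast_one] at this
  · intro h H
    obtain ⟨I, hI, hK⟩ := exists_coords_aux d H
    calc (Module.finrank ℝ H : ℝ) ≤ (I.card : ℝ) := by exact_mod_cast hI
      _ = ∑ i ∈ I, (1 : ℝ) := by simp
      _ ≤ ∑ i ∈ I, ∑ j, s j * (if i ∈ K j then (1 : ℝ) else 0) := by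
          refine Finset.sum_le_sum fun i _ => (h i).trans ?_
          exact Finset.sum_le_sum fun j _ =>
            mul_le_mul_of_nonneg_left (delta_le_aux d (K j) i) (hs j).1
      _ = ∑ j, s j * ((I ∩ K j).card : ℝ) := by
          rw [Finset.sum_comm]
          refine Finset.sum_congr rfl fun j _ => ?_
          rw [← Finset.mul_sum, Finset.sum_ite_mem]
          simp
      _ ≤ _ := Finset.sum_le_sum fun j _ =>
            mul_le_mul_of_nonneg_left (by exact_mod_cast hK (K j)) (hs j).1
end

section
/- Let d ≥ 1 and for j = 1, …, m let φ_j : ℤ^d → ℤ^{d_j} be the projection onto a subset of d_j of the coordinates, and for i ∈ {1, …, d} let δ_{i,j} = 1 if φ_j retains coordinate i and δ_{i,j} = 0 otherwise. Let (s_1, …, s_m) ∈ [0,1]^m satisfy Σ_{j=1}^m s_j · δ_{i,j} ≥ 1 for every i ∈ {1, …, d}. Then every finite set E ⊆ ℤ^d satisfies |E| ≤ Π_{j=1}^m |φ_j(E)|^{s_j}. In particular, if in addition |φ_j(E)| ≤ S for every j with S ≥ 1, then |E| ≤ S^{Σ_{j=1}^m s_j}. -/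
/-- The projection of `ℤ^d` onto the coordinates in `K`. -/
def coordProjZ (d : ℕ) (K : Finset (Fin d)) (x : Fin d → ℤ) : { i // i ∈ K } → ℤ :=
  fun i => x (i : Fin d)

/-- Generalized Hölder inequality for finite sums with exponents summing to at least one. -/
lemma holder_aux {α β : Type*} (J : Finset α) (T : Finset β) (s : α → ℝ)
    (hs : ∀ j ∈ J, 0 ≤ s j) (hsum : 1 ≤ ∑ j ∈ J, s j) (a : α → β → ℝ)
    (ha : ∀ j ∈ J, ∀ t ∈ T, 0 < a j t) :
    ∑ t ∈ T, ∏ j ∈ J, (a j t) ^ (s j) ≤ ∏ j ∈ J, (∑ t ∈ T, a j t) ^ (s j) := by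
  rcases T.eq_empty_or_nonempty with rfl | hT
  · simp only [Finset.sum_empty]
    exact Finset.prod_nonneg fun j _ => Real.rpow_nonneg le_rfl _
  have hA : ∀ j ∈ J, 0 < ∑ t ∈ T, a j t := fun j hj => Finset.sum_pos (ha j hj) hT
  set σ := ∑ j ∈ J, s j with hσ
  have hσ0 : 0 < σ := by linarith
  set P := ∏ j ∈ J, (∑ t ∈ T, a j t) ^ (s j) with hP
  have hP0 : 0 ≤ P := Finset.prod_nonneg fun j hj => Real.rpow_nonneg (hA j hj).le _
  have key : ∀ t ∈ T, ∏ j ∈ J, (a j t) ^ (s j) ≤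
      P * ∑ j ∈ J, (s j / σ) * (a j t / ∑ t ∈ T, a j t) := by
    intro t ht
    have h1 : ∏ j ∈ J, (a j t) ^ (s j) = P * ∏ j ∈ J, (a j t / ∑ t ∈ T, a j t) ^ (s j) := by
      rw [hP, ← Finset.prod_mul_distrib]
      refine Finset.prod_congr rfl fun j hj => ?_
      rw [← Real.mul_rpow (hA j hj).le (div_pos (ha j hj t ht) (hA j hj)).le,
        mul_div_cancel₀ _ (hA j hj).ne']
    rw [h1]
    refine mul_le_mul_of_nonneg_left ?_ hP0
    calc ∏ j ∈ J, (a j t / ∑ t ∈ T, a j t) ^ (s j)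
        ≤ ∏ j ∈ J, (a j t / ∑ t ∈ T, a j t) ^ (s j / σ) := by
          refine Finset.prod_le_prod
            (fun j hj => Real.rpow_nonneg (div_pos (ha j hj t ht) (hA j hj)).le _)
            fun j hj => ?_
          refine Real.rpow_le_rpow_of_exponent_ge (div_pos (ha j hj t ht) (hA j hj)) ?_
            (div_le_self (hs j hj) hsum)
          rw [div_le_one (hA j hj)]
          exact Finset.single_le_sum (f := fun t => a j t) (fun t ht => (ha j hj t ht).le) ht
      _ ≤ _ := by
          refine Real.geom_mean_le_arith_mean_weighted J _ _
            (fun j hj => div_nonneg (hs j hj) hσ0.le) ?_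
            (fun j hj => (div_pos (ha j hj t ht) (hA j hj)).le)
          rw [← Finset.sum_div, ← hσ, div_self hσ0.ne']
  refine (Finset.sum_le_sum key).trans ?_
  rw [← Finset.mul_sum, Finset.sum_comm]
  have : ∑ j ∈ J, ∑ t ∈ T, (s j / σ) * (a j t / ∑ t ∈ T, a j t) = 1 := by
    have : ∀ j ∈ J, ∑ t ∈ T, (s j / σ) * (a j t / ∑ t ∈ T, a j t) = s j / σ := by
      intro j hj
      rw [← Finset.mul_sum, ← Finset.sum_div, div_self (hA j hj).ne', mul_one]
    rw [Finset.sum_congr rfl this, ← Finset.sum_div, ← hσ, div_self hσ0.ne']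
  rw [this, mul_one]

lemma slice_card (d : ℕ) (K : Finset (Fin d)) (i : Fin d) (hi : i ∈ K)
    (E : Finset (Fin d → ℤ)) :
    ((E.image (coordProjZ d K)).card : ℝ) =
      ∑ t ∈ E.image (fun x => x i),
        (((E.filter (fun x => x i = t)).image (coordProjZ d K)).card : ℝ) := by
  rw [Finset.card_eq_sum_card_fiberwise (f := fun y => y ⟨i, hi⟩) (t := E.image (fun x => x i))]
  · push_cast
    refine Finset.sum_congr rfl fun t _ => ?_
    rw [Finset.filter_image]
    rfl
  · intro y hy
    simp only [Finset.coe_image, Set.mem_image, Finset.mem_coe] at hy ⊢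
    obtain ⟨x, hx, rfl⟩ := hy
    exact ⟨x, hx, rfl⟩

lemma bl_aux (d : ℕ) (m : ℕ) (K : Fin m → Finset (Fin d))
    (s : Fin m → ℝ) (hs : ∀ j, 0 ≤ s j)
    (hδ : ∀ i : Fin d, (1 : ℝ) ≤ ∑ j, s j * (if i ∈ K j then (1 : ℝ) else 0))
    (T : Finset (Fin d)) : ∀ E : Finset (Fin d → ℤ), E.Nonempty →
    (∀ x ∈ E, ∀ y ∈ E, ∀ i, i ∉ T → x i = y i) →
    (E.card : ℝ) ≤ ∏ j, ((E.image (coordProjZ d (K j))).card : ℝ) ^ (s j) := by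
  classical
  induction T using Finset.induction_on with
  | empty =>
    intro E hE h
    obtain ⟨x, hx⟩ := hE
    have : E = {x} := by
      refine Finset.eq_singleton_iff_unique_mem.2 ⟨hx, fun y hy => ?_⟩
      funext i
      exact h y hy x hx i (by simp)
    subst this
    simp
  | insert i T hiT ih =>
    intro E hE h
    set J := Finset.univ.filter (fun j => i ∈ K j) with hJ
    set c : Fin m → ℤ → ℝ := fun j t =>
      (((E.filter (fun x => x i = t)).image (coordProjZ d (K j))).card : ℝ) with hc
    have hne : ∀ t ∈ E.image (fun x => x i), (E.filter (fun x => x i = t)).Nonempty := by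
      intro t ht
      obtain ⟨x, hx, rfl⟩ := Finset.mem_image.1 ht
      exact ⟨x, by simp [hx]⟩
    have hcard : (E.card : ℝ) =
        ∑ t ∈ E.image (fun x => x i), ((E.filter (fun x => x i = t)).card : ℝ) := by
      rw [Finset.card_eq_sum_card_image (fun x : Fin d → ℤ => x i) E]
      push_cast
      rfl
    set Q := ∏ j with i ∉ K j, ((E.image (coordProjZ d (K j))).card : ℝ) ^ (s j) with hQ
    have hQ0 : 0 ≤ Q := Finset.prod_nonneg fun j _ => by positivity
    have hstep : ∀ t ∈ E.image (fun x => x i),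
        ((E.filter (fun x => x i = t)).card : ℝ) ≤ (∏ j ∈ J, c j t ^ s j) * Q := by
      intro t ht
      refine (ih _ (hne t ht) ?_).trans ?_
      · intro x hx y hy k hk
        simp only [Finset.mem_filter] at hx hy
        by_cases hki : k = i
        · subst hki
          rw [hx.2, hy.2]
        · exact h x hx.1 y hy.1 k (by simp [hki, hk])
      · rw [← Finset.prod_filter_mul_prod_filter_not Finset.univ (fun j => i ∈ K j)]
        refine mul_le_mul_of_nonneg_left ?_ (Finset.prod_nonneg fun j _ => by positivity)
        refine Finset.prod_le_prod (fun j _ => by positivity) fun j _ => ?_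
        refine Real.rpow_le_rpow (by positivity) ?_ (hs j)
        exact_mod_cast Finset.card_le_card
          (Finset.image_subset_image (Finset.filter_subset _ _))
    rw [hcard]
    refine (Finset.sum_le_sum hstep).trans ?_
    rw [← Finset.sum_mul,
      ← Finset.prod_filter_mul_prod_filter_not Finset.univ (fun j => i ∈ K j)]
    refine mul_le_mul_of_nonneg_right ?_ hQ0
    refine (holder_aux J _ s (fun j _ => hs j) ?_ c ?_).trans (le_of_eq ?_)
    · have := hδ i
      simpa [hJ, Finset.sum_filter] using this
    · intro j _ t ht
      have := ((hne t ht).image (coordProjZ d (K j))).card_pos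
      exact Nat.cast_pos.2 this
    · refine Finset.prod_congr rfl fun j hj => ?_
      rw [slice_card d (K j) i (by simpa [hJ] using hj) E]

/-- discrete Brascamp–Lieb inequality for coordinate projections.
Let `φ_j : ℤ^d → ℤ^{d_j}` project onto the coordinates in `K j`, let `δ_{i,j}` be `1`
if `φ_j` retains coordinate `i` and `0` otherwise, and let `s_j ∈ [0,1]` satisfy
`Σ_j s_j·δ_{i,j} ≥ 1` for every `i`. Then every finite `E ⊆ ℤ^d` satisfies
`|E| ≤ Π_j |φ_j(E)|^{s_j}`; in particular, if moreover `|φ_j(E)| ≤ S` for all `j` with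
`S ≥ 1`, then `|E| ≤ S^{Σ_j s_j}`. -/
theorem stmt12 (d : ℕ) (hd : 1 ≤ d) (m : ℕ) (K : Fin m → Finset (Fin d))
    (s : Fin m → ℝ) (hs : ∀ j, s j ∈ Set.Icc (0 : ℝ) 1)
    (hδ : ∀ i : Fin d, (1 : ℝ) ≤ ∑ j, s j * (if i ∈ K j then (1 : ℝ) else 0))
    (E : Finset (Fin d → ℤ)) :
    (E.card : ℝ) ≤ ∏ j, ((E.image (coordProjZ d (K j))).card : ℝ) ^ (s j) ∧
    ∀ S : ℝ, 1 ≤ S → (∀ j, ((E.image (coordProjZ d (K j))).card : ℝ) ≤ S) →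
      (E.card : ℝ) ≤ S ^ (∑ j, s j) := by
  classical
  have main : (E.card : ℝ) ≤ ∏ j, ((E.image (coordProjZ d (K j))).card : ℝ) ^ (s j) := by
    rcases E.eq_empty_or_nonempty with rfl | hE
    · simp only [Finset.card_empty, Nat.cast_zero]
      exact Finset.prod_nonneg fun j _ => by positivity
    · exact bl_aux d m K s (fun j => (hs j).1) hδ Finset.univ E hE
        (fun _ _ _ _ i hi => absurd (Finset.mem_univ i) hi)
  refine ⟨main, fun S hS hb => main.trans ?_⟩
  rw [Real.rpow_sum_of_pos (by linarith)]
  exact Finset.prod_le_prod (fun j _ => by positivity) fun j _ =>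
    Real.rpow_le_rpow (by positivity) (hb j) (hs j).1
end
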